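/- The cubic B_n-Toda bracket π₃, given by {a_i, a_{i+1}} = a_i a_{i+1} b_{i+1}, {a_i, b_i} = −a_i b_i² − a_i³ (for i < n), {a_n, b_n} = −a_n b_n² − 2a_n³, {a_i, b_{i+2}} = a_i a_{i+1}², {a_i, b_{i+1}} = a_i b_{i+1}² + a_i³, {a_i, b_{i−1}} = −a_{i−1}² a_i, {b_i, b_{i+1}} = 2a_i²(b_i + b_{i+1}), all other coordinate brackets zero, satisfies the Jacobi identity and is compatible with the linear bracket π₁ given by {a_i, b_i} = −a_i, {a_i, b_{i+1}} = a_i. -/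

import Mathlib

/-- Index set for `B_n`-Toda variables `(a_1, …, a_n, b_1, …, b_n)` (0-based). -/
abbrev BnIdx (n : ℕ) := Fin n ⊕ Fin n

/-- The value of the `a`-variable with (0-based) index `m`, zero out of range. -/
noncomputable def av {n : ℕ} (x : BnIdx n → ℝ) (m : ℕ) : ℝ :=
  if h : m < n then x (.inl ⟨m, h⟩) else 0

/-- The value of the `b`-variable with (0-based) index `m`, zero out of range. -/
noncomputable def bv {n : ℕ} (x : BnIdx n → ℝ) (m : ℕ) : ℝ :=
  if h : m < n then x (.inr ⟨m, h⟩) else 0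

/-- Structure matrix of the linear `B_n`-Toda bracket `π₁`:
`{a_i, b_i} = −a_i`, `{a_i, b_{i+1}} = a_i`, all other coordinate brackets zero. -/
noncomputable def bnLinP (n : ℕ) : BnIdx n → BnIdx n → (BnIdx n → ℝ) → ℝ
  | .inl i, .inr j, x =>
      if (j : ℕ) = (i : ℕ) then -(x (.inl i))
      else if (j : ℕ) = (i : ℕ) + 1 then x (.inl i) else 0
  | .inr j, .inl i, x =>
      -(if (j : ℕ) = (i : ℕ) then -(x (.inl i))
        else if (j : ℕ) = (i : ℕ) + 1 then x (.inl i) else 0)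
  | _, _, _ => 0

/-- The entry `{a_i, b_j}` of the cubic `B_n`-Toda bracket `π₃`:
`{a_i, b_{i−1}} = −a_{i−1}² a_i`;  `{a_i, b_i} = −a_i b_i² − a_i³` for `i < n`
and `{a_n, b_n} = −a_n b_n² − 2a_n³`;  `{a_i, b_{i+1}} = a_i b_{i+1}² + a_i³`;
`{a_i, b_{i+2}} = a_i a_{i+1}²`. -/
noncomputable def bnCubAB (n : ℕ) (i j : Fin n) (x : BnIdx n → ℝ) : ℝ :=
  if (j : ℕ) + 1 = (i : ℕ) then -((av x j)^2 * av x i)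
  else if (j : ℕ) = (i : ℕ) then
    (if (i : ℕ) + 1 = n then -(av x i * (bv x j)^2) - 2 * (av x i)^3
     else -(av x i * (bv x j)^2) - (av x i)^3)
  else if (j : ℕ) = (i : ℕ) + 1 then av x i * (bv x j)^2 + (av x i)^3
  else if (j : ℕ) = (i : ℕ) + 2 then av x i * (av x ((i : ℕ) + 1))^2
  else 0

/-- Structure matrix of the cubic `B_n`-Toda bracket `π₃`:  additionally
`{a_i, a_{i+1}} = a_i a_{i+1} b_{i+1}` and `{b_i, b_{i+1}} = 2a_i²(b_i + b_{i+1})`;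
all other coordinate brackets zero. -/
noncomputable def bnCubP (n : ℕ) : BnIdx n → BnIdx n → (BnIdx n → ℝ) → ℝ
  | .inl i, .inl j, x =>
      if (j : ℕ) = (i : ℕ) + 1 then av x i * av x j * bv x j
      else if (i : ℕ) = (j : ℕ) + 1 then -(av x j * av x i * bv x i) else 0
  | .inl i, .inr j, x => bnCubAB n i j x
  | .inr j, .inl i, x => -(bnCubAB n i j x)
  | .inr i, .inr j, x =>
      if (j : ℕ) = (i : ℕ) + 1 then 2 * (av x i)^2 * (bv x i + bv x j)
      else if (i : ℕ) = (j : ℕ) + 1 then -(2 * (av x j)^2 * (bv x j + bv x i)) else 0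

/-- Partial derivative in the `s`-th coordinate direction. -/
noncomputable def pd {n : ℕ} (f : (BnIdx n → ℝ) → ℝ) (s : BnIdx n) (x : BnIdx n → ℝ) : ℝ :=
  fderiv ℝ f x (Pi.single s 1)

/-! Interleave the variables as `z = (b_1, a_1, b_2, a_2, …)`. The bracket `{z_p, z_q}` vanishes for
`|p - q| > 3` and otherwise involves only the variables from `z_p` to `z_q`. Hence the Jacobi
identity for `u < v < w` only sees the window from `z_u` to `z_w`, so cutting the lattice off at
`2n` variables does no harm, and it is trivial unless both gaps `v - u` and `w - v` are at most `3`.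
What is left is one polynomial identity for each pair of gaps and each parity of `u`.

Adding `t π₁` to `π₃` only replaces `b²` by `b² + t` in `{a_i, b_i}` and `{a_i, b_{i+1}}`.
Rescaling each `a_i` replaces `a_i²` by `c_i a_i²` throughout, with `c_i` arbitrary, and the last
bracket `{a_n, b_n} = -a_n b_n² - 2 a_n³` is the case `c_n = 2` because `a_n²` occurs nowhere else.
So one identity with parameters `t` and `c`, free of boundary cases, covers everything. -/

section Jacobiator

/-- The Jacobiator `{{z_v, z_w}, z_u} + {{z_w, z_u}, z_v} + {{z_u, z_v}, z_w}` of a bracket given by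
its values `β p q = {z_p, z_q}` on coordinates and by the Hamiltonian derivations `D q = {·, z_q}`.
The elements `z_p` themselves do not enter. -/
def jacobiator {R A ι : Type*} [CommSemiring R] [CommRing A] [Algebra R A]
    (D : ι → Derivation R A A) (β : ι → ι → A) (u v w : ι) : A :=
  D u (β v w) + D v (β w u) + D w (β u v)

variable {R A ι : Type*} [CommSemiring R] [CommRing A] [Algebra R A]
  {D : ι → Derivation R A A} {β : ι → ι → A}

theorem jacobiator_rotate (u v w : ι) : jacobiator D β v w u = jacobiator D β u v w := by
  unfold jacobiator
  ring

theorem jacobiator_swap (hβ : ∀ p q, β q p = -β p q) (u v w : ι) :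
    jacobiator D β u w v = -jacobiator D β u v w := by
  simp only [jacobiator, hβ v w, hβ u v, hβ w u, map_neg]
  ring

theorem jacobiator_self_right (hβ : ∀ p q, β q p = -β p q) (hβ₀ : ∀ p, β p p = 0) (u v : ι) :
    jacobiator D β u v v = 0 := by
  simp [jacobiator, hβ u v, hβ₀]

theorem jacobiator_eq_zero_of_lt [LinearOrder ι] {s : Set ι}
    (hβ : ∀ p q, β q p = -β p q) (hβ₀ : ∀ p, β p p = 0)
    (hlt : ∀ u ∈ s, ∀ v ∈ s, ∀ w ∈ s, u < v → v < w → jacobiator D β u v w = 0) :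
    ∀ u ∈ s, ∀ v ∈ s, ∀ w ∈ s, jacobiator D β u v w = 0 := by
  have hle : ∀ u ∈ s, ∀ v ∈ s, ∀ w ∈ s, u ≤ v → v ≤ w → jacobiator D β u v w = 0 := by
    intro u hu v hv w hw huv hvw
    rcases hvw.eq_or_lt with rfl | hvw
    · exact jacobiator_self_right hβ hβ₀ u v
    rcases huv.eq_or_lt with rfl | huv
    · rw [jacobiator_rotate w, jacobiator_self_right hβ hβ₀]
    · exact hlt u hu v hv w hw huv hvw
  have hmin : ∀ u ∈ s, ∀ v ∈ s, ∀ w ∈ s, u ≤ v → u ≤ w → jacobiator D β u v w = 0 := by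
    intro u hu v hv w hw huv huw
    rcases le_total v w with hvw | hwv
    · exact hle u hu v hv w hw huv hvw
    · rw [jacobiator_swap hβ, hle u hu w hw v hv huw hwv, neg_zero]
  intro u hu v hv w hw
  rcases le_total u v with huv | hvu
  · rcases le_total u w with huw | hwu
    · exact hmin u hu v hv w hw huv huw
    · rw [jacobiator_rotate w, hmin w hw u hu v hv hwu (hwu.trans huv)]
  · rcases le_total v w with hvw | hwv
    · rw [← jacobiator_rotate, hmin v hv w hw u hu hvw hvu]
    · rw [jacobiator_rotate w, hmin w hw u hu v hv (hwv.trans hvu) hwv]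

end Jacobiator

section PolynomialBrackets

open MvPolynomial

variable {𝕜 σ : Type*} [NontriviallyNormedField 𝕜]

theorem differentiableAt_eval_mvPolynomial [Finite σ] (p : MvPolynomial σ 𝕜) (x : σ → 𝕜) :
    DifferentiableAt 𝕜 (fun y ↦ eval y p) x :=
  have := Fintype.ofFinite σ
  (AnalyticOnNhd.eval_continuousLinearMap (.id 𝕜 (σ → 𝕜)) p x trivial).differentiableAt

theorem fderiv_eval_mvPolynomial [Finite σ] (f : σ → MvPolynomial σ 𝕜) (p : MvPolynomial σ 𝕜)
    (x : σ → 𝕜) :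
    fderiv 𝕜 (fun y ↦ eval y p) x (fun s ↦ eval x (f s)) = eval x (mkDerivation 𝕜 f p) := by
  have := Fintype.ofFinite σ
  induction p using MvPolynomial.induction_on with
  | C r => simp
  | add p q hp hq =>
    simp only [map_add, fderiv_fun_add (differentiableAt_eval_mvPolynomial p x)
      (differentiableAt_eval_mvPolynomial q x), add_apply, hp, hq]
  | mul_X p i hp =>
    simp [fderiv_fun_mul (differentiableAt_eval_mvPolynomial p x) (differentiableAt_apply i x), hp,
      (hasFDerivAt_apply i x).fderiv]

theorem sum_eval_mul_fderiv [Fintype σ] [DecidableEq σ] (f : σ → MvPolynomial σ 𝕜)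
    (p : MvPolynomial σ 𝕜) (x : σ → 𝕜) :
    ∑ s, eval x (f s) * fderiv 𝕜 (fun y ↦ eval y p) x (Pi.single s 1)
      = eval x (mkDerivation 𝕜 f p) := by
  rw [← fderiv_eval_mvPolynomial, pi_eq_sum_univ' fun s ↦ eval x (f s), map_sum]
  simp only [map_smul, smul_eq_mul]

end PolynomialBrackets

section TodaBracket

variable {R A : Type*} [CommRing R] [CommRing A] [Algebra R A]

/-- The rescaled square `c_p z_p²`, taking the place of `a_i²` when `z_p = a_i`. -/
def todaWeight (c : ℕ → R) (z : ℕ → A) (p : ℕ) : A :=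
  algebraMap R A (c p) * z p ^ 2

/-- The bracket `{z_p, z_{p+d}}` of the infinite Toda lattice with interleaved variables
`z = (b_1, a_1, b_2, a_2, …)`, for the pencil `t π₁ + π₃` with each `a_i²` rescaled by `c`.
Positions start at `0`, so `z_p` is a `b`-variable for even `p` and an `a`-variable for odd `p`.
The value at `d = 0` is `0`. -/
def todaUpper (t : R) (c : ℕ → R) (z : ℕ → A) (p : ℕ) : ℕ → A
  | 1 =>
    if Even p then z (p + 1) * (z p ^ 2 + algebraMap R A t + todaWeight c z (p + 1))
    else z p * (z (p + 1) ^ 2 + algebraMap R A t + todaWeight c z p)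
  | 2 =>
    if Even p then 2 • (todaWeight c z (p + 1) * (z p + z (p + 2)))
    else z p * z (p + 1) * z (p + 2)
  | 3 =>
    if Even p then todaWeight c z (p + 1) * z (p + 3)
    else z p * todaWeight c z (p + 2)
  | _ => 0

/-- The skew extension of `todaUpper` to all pairs of positions. At most one of the two truncated
differences is nonzero, and the term with a zero difference vanishes. -/
def todaBracket (t : R) (c : ℕ → R) (z : ℕ → A) (p q : ℕ) : A :=
  todaUpper t c z p (q - p) - todaUpper t c z q (p - q)

variable {t : R} {c : ℕ → R} {z : ℕ → A}

theorem todaBracket_skew (p q : ℕ) : todaBracket t c z q p = -todaBracket t c z p q :=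
  (neg_sub _ _).symm

theorem todaBracket_self (p : ℕ) : todaBracket t c z p p = 0 :=
  sub_self _

theorem todaBracket_add_right (p d : ℕ) :
    todaBracket t c z p (p + d) = todaUpper t c z p d := by
  simp [todaBracket, todaUpper]

theorem todaBracket_add_left (p d : ℕ) :
    todaBracket t c z (p + d) p = -todaUpper t c z p d := by
  rw [todaBracket_skew, todaBracket_add_right]

theorem todaUpper_eq_zero {d : ℕ} (hd : 3 < d) (p : ℕ) : todaUpper t c z p d = 0 := by
  unfold todaUpper
  split <;> first | omega | rfl

theorem todaBracket_eq_zero {p q : ℕ} (h : p + 3 < q ∨ q + 3 < p) : todaBracket t c z p q = 0 := by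
  rcases h with h | h
  · obtain ⟨d, rfl⟩ := Nat.exists_eq_add_of_le (show p ≤ q by omega)
    rw [todaBracket_add_right, todaUpper_eq_zero (by omega)]
  · obtain ⟨d, rfl⟩ := Nat.exists_eq_add_of_le (show q ≤ p by omega)
    rw [todaBracket_add_left, todaUpper_eq_zero (by omega), neg_zero]

theorem derivation_todaWeight (D : Derivation R A A) (p : ℕ) :
    D (todaWeight c z p) = 2 • (algebraMap R A (c p) * z p * D (z p)) := by
  simp [todaWeight, Derivation.leibniz_pow, mul_assoc, mul_left_comm]

theorem derivation_todaUpper_eq_zero (D : Derivation R A A) {p d : ℕ}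
    (hD : ∀ s, p ≤ s → s ≤ p + d → D (z s) = 0) : D (todaUpper t c z p d) = 0 := by
  unfold todaUpper
  split <;> first | exact map_zero D | split_ifs
  all_goals
    simp (disch := omega) only [hD, map_add, map_nsmul, Derivation.leibniz, Derivation.leibniz_pow,
      Derivation.map_algebraMap, derivation_todaWeight, smul_zero, mul_zero, add_zero]

variable {D : ℕ → Derivation R A A} {N : ℕ}

theorem jacobiator_todaBracket_add (u k l : ℕ) :
    jacobiator D (todaBracket t c z) u (u + k) (u + k + l) =
      D u (todaUpper t c z (u + k) l) - D (u + k) (todaUpper t c z u (k + l))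
        + D (u + k + l) (todaUpper t c z u k) := by
  rw [jacobiator, todaBracket_add_right, todaBracket_add_right, add_assoc u, todaBracket_add_left,
    map_neg, sub_eq_add_neg]

theorem jacobiator_todaBracket_of_near
    (hD : ∀ p < N, ∀ q < N, D q (z p) = todaBracket t c z p q) {u k l : ℕ} (hN : u + k + l < N)
    (hk : k ∈ Finset.Icc 1 3) (hl : l ∈ Finset.Icc 1 3) :
    jacobiator D (todaBracket t c z) u (u + k) (u + k + l) = 0 := by
  rw [jacobiator_todaBracket_add]
  fin_cases hk <;> fin_cases hl <;> by_cases hu : Even u <;>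
  · -- Each `D q (z p)` becomes a bracket of two positions inside the window, and `omega` decides
    -- which of its two truncated differences is zero.
    simp (disch := omega) only [todaUpper, todaWeight, todaBracket, hD, hu, Nat.even_add_one,
      not_true_eq_false, not_false_eq_true, if_true, if_false, map_zero, map_add, map_nsmul,
      Derivation.leibniz, Derivation.leibniz_pow, Derivation.map_algebraMap, smul_eq_mul,
      add_assoc, Nat.reduceAdd, Nat.reduceSub, Nat.sub_eq_zero_of_le, add_tsub_cancel_left,
      Nat.add_sub_add_left] at hN ⊢
    ring

theorem jacobiator_todaBracket_of_far
    (hD : ∀ p < N, ∀ q < N, D q (z p) = todaBracket t c z p q) {u k l : ℕ} (hN : u + k + l < N)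
    (hkl : 3 < k ∨ 3 < l) : jacobiator D (todaBracket t c z) u (u + k) (u + k + l) = 0 := by
  rw [jacobiator_todaBracket_add, todaUpper_eq_zero (d := k + l) (by omega), map_zero, sub_zero]
  rcases hkl with hk | hl
  · rw [todaUpper_eq_zero hk, map_zero, add_zero]
    refine derivation_todaUpper_eq_zero _ fun s _ _ ↦ ?_
    rw [hD s (by omega) _ (by omega), todaBracket_eq_zero (by omega)]
  · rw [todaUpper_eq_zero hl, map_zero, zero_add]
    refine derivation_todaUpper_eq_zero _ fun s _ _ ↦ ?_
    rw [hD s (by omega) _ (by omega), todaBracket_eq_zero (by omega)]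

theorem jacobiator_todaBracket (hD : ∀ p < N, ∀ q < N, D q (z p) = todaBracket t c z p q) :
    ∀ u < N, ∀ v < N, ∀ w < N, jacobiator D (todaBracket t c z) u v w = 0 := by
  refine jacobiator_eq_zero_of_lt (s := Set.Iio N) todaBracket_skew todaBracket_self ?_
  intro u _ v _ w hw huv hvw
  obtain ⟨k, rfl⟩ := Nat.exists_eq_add_of_le huv.le
  obtain ⟨l, rfl⟩ := Nat.exists_eq_add_of_le hvw.le
  by_cases hkl : 3 < k ∨ 3 < l
  · exact jacobiator_todaBracket_of_far hD hw hkl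
  · exact jacobiator_todaBracket_of_near hD hw (Finset.mem_Icc.2 (by omega))
      (Finset.mem_Icc.2 (by omega))

end TodaBracket

section BnToda

open MvPolynomial

/-- The position of a `B_n`-Toda variable in the interleaved order `b_1, a_1, b_2, a_2, …`. -/
def bnPos {n : ℕ} : BnIdx n → ℕ :=
  Sum.elim (fun i ↦ 2 * i + 1) (fun i ↦ 2 * i)

theorem bnPos_injective {n : ℕ} : Function.Injective (bnPos (n := n)) := by
  rintro (i | i) (j | j) h <;> simp only [bnPos, Sum.elim_inl, Sum.elim_inr] at h
  · exact congrArg Sum.inl (Fin.ext (by omega))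
  · omega
  · omega
  · exact congrArg Sum.inr (Fin.ext (by omega))

theorem bnPos_lt {n : ℕ} (s : BnIdx n) : bnPos s < 2 * n := by
  rcases s with i | i <;> simp only [bnPos, Sum.elim_inl, Sum.elim_inr] <;> omega

theorem exists_bnPos_eq {n p : ℕ} (hp : p < 2 * n) : ∃ s : BnIdx n, bnPos s = p := by
  rcases p.even_or_odd' with ⟨m, rfl | rfl⟩
  · exact ⟨.inr ⟨m, by omega⟩, rfl⟩
  · exact ⟨.inl ⟨m, by omega⟩, rfl⟩

/-- The interleaved sequence of polynomial variables, continued by `0` past position `2n`, as `av`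
and `bv` are out of range. -/
noncomputable def bnVar (n : ℕ) : ℕ → MvPolynomial (BnIdx n) ℝ :=
  Function.extend bnPos X 0

variable {n : ℕ}

theorem bnVar_bnPos (s : BnIdx n) : bnVar n (bnPos s) = X s :=
  bnPos_injective.extend_apply X 0 s

theorem bnVar_of_le {p : ℕ} (hp : 2 * n ≤ p) : bnVar n p = 0 :=
  Function.extend_apply' _ _ _ fun ⟨s, hs⟩ ↦ (hs ▸ bnPos_lt s).not_ge hp

theorem eval_bnVar_even (x : BnIdx n → ℝ) (m : ℕ) : eval x (bnVar n (2 * m)) = bv x m := by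
  unfold bv
  split_ifs with hm
  · exact (congrArg (eval x) (bnVar_bnPos (.inr ⟨m, hm⟩))).trans (eval_X _)
  · rw [bnVar_of_le (by omega), map_zero]

theorem eval_bnVar_odd (x : BnIdx n → ℝ) (m : ℕ) : eval x (bnVar n (2 * m + 1)) = av x m := by
  unfold av
  split_ifs with hm
  · exact (congrArg (eval x) (bnVar_bnPos (.inl ⟨m, hm⟩))).trans (eval_X _)
  · rw [bnVar_of_le (by omega), map_zero]

/-- The scaling factors of the `a_i²` for the `B_n` lattice: the factor `2` at `a_n` accounts for
the exceptional bracket `{a_n, b_n}`. -/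
noncomputable def bnWeight (n p : ℕ) : ℝ :=
  if p + 1 = 2 * n then 2 else 1

/-- The structure polynomials of the pencil `t π₁ + π₃`, indexed by interleaved positions. -/
noncomputable def bnPencil (n : ℕ) (t : ℝ) (p q : ℕ) : MvPolynomial (BnIdx n) ℝ :=
  todaBracket t (bnWeight n) (bnVar n) p q

theorem eval_todaWeight_bnVar (x : BnIdx n → ℝ) (m : ℕ) :
    eval x (todaWeight (bnWeight n) (bnVar n) (2 * m + 1))
      = (if m + 1 = n then 2 else 1) * av x m ^ 2 := by
  simp only [todaWeight, map_mul, map_pow, eval_bnVar_odd, algebraMap_eq, eval_C, bnWeight,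
    show 2 * m + 1 + 1 = 2 * n ↔ m + 1 = n by omega]

theorem eval_todaUpper_even_one (t : ℝ) (x : BnIdx n → ℝ) (m : ℕ) :
    eval x (todaUpper t (bnWeight n) (bnVar n) (2 * m) 1)
      = av x m * (bv x m ^ 2 + t + (if m + 1 = n then 2 else 1) * av x m ^ 2) := by
  simp [todaUpper, eval_bnVar_even, eval_bnVar_odd, eval_todaWeight_bnVar, algebraMap_eq]

theorem eval_todaUpper_odd_one (t : ℝ) (x : BnIdx n → ℝ) (m : ℕ) :
    eval x (todaUpper t (bnWeight n) (bnVar n) (2 * m + 1) 1)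
      = av x m * (bv x (m + 1) ^ 2 + t + (if m + 1 = n then 2 else 1) * av x m ^ 2) := by
  simp [todaUpper, show 2 * m + 1 + 1 = 2 * (m + 1) by ring, eval_bnVar_even, eval_bnVar_odd,
    eval_todaWeight_bnVar, algebraMap_eq]

theorem eval_todaUpper_even_two (t : ℝ) (x : BnIdx n → ℝ) (m : ℕ) :
    eval x (todaUpper t (bnWeight n) (bnVar n) (2 * m) 2)
      = 2 * ((if m + 1 = n then 2 else 1) * av x m ^ 2 * (bv x m + bv x (m + 1))) := by
  simp [todaUpper, show 2 * m + 2 = 2 * (m + 1) by ring, eval_bnVar_even, eval_todaWeight_bnVar]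

theorem eval_todaUpper_odd_two (t : ℝ) (x : BnIdx n → ℝ) (m : ℕ) :
    eval x (todaUpper t (bnWeight n) (bnVar n) (2 * m + 1) 2)
      = av x m * bv x (m + 1) * av x (m + 1) := by
  simp [todaUpper, show 2 * m + 1 + 1 = 2 * (m + 1) by ring,
    show 2 * m + 1 + 2 = 2 * (m + 1) + 1 by ring, eval_bnVar_even, eval_bnVar_odd]

theorem eval_todaUpper_even_three (t : ℝ) (x : BnIdx n → ℝ) (m : ℕ) :
    eval x (todaUpper t (bnWeight n) (bnVar n) (2 * m) 3)
      = (if m + 1 = n then 2 else 1) * av x m ^ 2 * av x (m + 1) := by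
  simp [todaUpper, show 2 * m + 3 = 2 * (m + 1) + 1 by ring, eval_bnVar_odd, eval_todaWeight_bnVar]

theorem eval_todaUpper_odd_three (t : ℝ) (x : BnIdx n → ℝ) (m : ℕ) :
    eval x (todaUpper t (bnWeight n) (bnVar n) (2 * m + 1) 3)
      = av x m * ((if m + 2 = n then 2 else 1) * av x (m + 1) ^ 2) := by
  simp [todaUpper, show 2 * m + 1 + 2 = 2 * (m + 1) + 1 by ring, eval_bnVar_odd,
    eval_todaWeight_bnVar]

theorem eval_bnPencil_inl_inl (t : ℝ) (i j : Fin n) (x : BnIdx n → ℝ) :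
    eval x (bnPencil n t (bnPos (.inl i)) (bnPos (.inl j))) = bnCubP n (.inl i) (.inl j) x := by
  simp only [bnPos, Sum.elim_inl, bnPencil, bnCubP]
  generalize (i : ℕ) = i, (j : ℕ) = j
  split_ifs with hij hji
  · subst hij
    rw [show 2 * (i + 1) + 1 = 2 * i + 1 + 2 by ring, todaBracket_add_right,
      eval_todaUpper_odd_two]
    ring
  · subst hji
    rw [show 2 * (j + 1) + 1 = 2 * j + 1 + 2 by ring, todaBracket_add_left, map_neg,
      eval_todaUpper_odd_two]
    ring
  · rcases eq_or_ne i j with rfl | hne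
    · rw [todaBracket_self, map_zero]
    · rw [todaBracket_eq_zero (by omega), map_zero]

theorem eval_bnPencil_inr_inr (t : ℝ) (i j : Fin n) (x : BnIdx n → ℝ) :
    eval x (bnPencil n t (bnPos (.inr i)) (bnPos (.inr j))) = bnCubP n (.inr i) (.inr j) x := by
  simp only [bnPos, Sum.elim_inr, bnPencil, bnCubP]
  obtain ⟨i, hi⟩ := i
  obtain ⟨j, hj⟩ := j
  dsimp only
  split_ifs with hij hji
  · subst hij
    rw [mul_add_one, todaBracket_add_right, eval_todaUpper_even_two, if_neg hj.ne]
    ring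
  · subst hji
    rw [mul_add_one, todaBracket_add_left, map_neg, eval_todaUpper_even_two, if_neg hi.ne]
    ring
  · rcases eq_or_ne i j with rfl | hne
    · rw [todaBracket_self, map_zero]
    · rw [todaBracket_eq_zero (by omega), map_zero]

theorem eval_bnPencil_inl_inr (t : ℝ) (i j : Fin n) (x : BnIdx n → ℝ) :
    eval x (bnPencil n t (bnPos (.inl i)) (bnPos (.inr j)))
      = t * bnLinP n (.inl i) (.inr j) x + bnCubP n (.inl i) (.inr j) x := by
  have hx : x (.inl i) = av x i := by simp only [av, i.isLt, dite_true]
  simp only [bnPos, Sum.elim_inl, Sum.elim_inr, bnPencil, bnLinP, bnCubP, bnCubAB, hx]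
  clear hx
  obtain ⟨i, hi⟩ := i
  obtain ⟨j, hj⟩ := j
  dsimp only
  rcases eq_or_ne (j + 1) i with rfl | h₀
  · rw [show 2 * (j + 1) + 1 = 2 * j + 3 by ring, todaBracket_add_left, map_neg,
      eval_todaUpper_even_three]
    simp (disch := omega) only [if_true, if_neg]
    ring
  rcases eq_or_ne j i with rfl | h₁
  · rw [todaBracket_add_left, map_neg, eval_todaUpper_even_one]
    simp (disch := omega) only [if_true, if_neg]
    split_ifs <;> ring
  rcases eq_or_ne j (i + 1) with rfl | h₂
  · rw [show 2 * (i + 1) = 2 * i + 1 + 1 by ring, todaBracket_add_right, eval_todaUpper_odd_one]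
    simp (disch := omega) only [if_true, if_neg]
    ring
  rcases eq_or_ne j (i + 2) with rfl | h₃
  · rw [show 2 * (i + 2) = 2 * i + 1 + 3 by ring, todaBracket_add_right, eval_todaUpper_odd_three]
    simp (disch := omega) only [if_true, if_neg]
    ring
  · rw [todaBracket_eq_zero (by omega), map_zero]
    simp only [h₀, h₁, h₂, h₃, if_false, mul_zero, add_zero]

theorem eval_bnPencil (t : ℝ) (u v : BnIdx n) (x : BnIdx n → ℝ) :
    eval x (bnPencil n t (bnPos u) (bnPos v)) = t * bnLinP n u v x + bnCubP n u v x := by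
  rcases u with i | i <;> rcases v with j | j
  · simp only [eval_bnPencil_inl_inl, bnLinP, mul_zero, zero_add]
  · exact eval_bnPencil_inl_inr t i j x
  · rw [bnPencil, todaBracket_skew, map_neg, ← bnPencil, eval_bnPencil_inl_inr]
    simp only [bnLinP, bnCubP]
    ring
  · simp only [eval_bnPencil_inr_inr, bnLinP, mul_zero, zero_add]

theorem bnPencil_jacobi (t : ℝ) (u v w : BnIdx n) :
    jacobiator (fun q ↦ mkDerivation ℝ fun s : BnIdx n ↦ bnPencil n t (bnPos s) q)
      (bnPencil n t) (bnPos u) (bnPos v) (bnPos w) = 0 := by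
  refine jacobiator_todaBracket (N := 2 * n) (fun p hp q _ ↦ ?_) _ (bnPos_lt u) _ (bnPos_lt v) _
    (bnPos_lt w)
  obtain ⟨s, rfl⟩ := exists_bnPos_eq hp
  rw [bnVar_bnPos, mkDerivation_X, bnPencil]

theorem bnCubic_jacobi_and_compatible_general (t : ℝ) (x : BnIdx n → ℝ) (u v w : BnIdx n) :
    ∑ s : BnIdx n,
      ((t * bnLinP n s u x + bnCubP n s u x)
          * pd (fun y ↦ t * bnLinP n v w y + bnCubP n v w y) s x
        + (t * bnLinP n s v x + bnCubP n s v x)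
          * pd (fun y ↦ t * bnLinP n w u y + bnCubP n w u y) s x
        + (t * bnLinP n s w x + bnCubP n s w x)
          * pd (fun y ↦ t * bnLinP n u v y + bnCubP n u v y) s x) = 0 := by
  simp only [← eval_bnPencil, pd, Finset.sum_add_distrib, sum_eval_mul_fderiv]
  simpa only [jacobiator, map_add, map_zero] using congrArg (eval x) (bnPencil_jacobi t u v w)

end BnToda

/-- The cubic `B_n`-Toda bracket `π₃` satisfies the Jacobi identity, and it is
compatible with the linear bracket `π₁`:  `π₁ + π₃` also satisfies the Jacobi
identity. -/
theorem bnCubic_jacobi_and_compatible (n : ℕ) :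
    (∀ (x : BnIdx n → ℝ) (u v w : BnIdx n),
      ∑ s : BnIdx n, (bnCubP n s u x * pd (bnCubP n v w) s x
        + bnCubP n s v x * pd (bnCubP n w u) s x
        + bnCubP n s w x * pd (bnCubP n u v) s x) = 0)
    ∧ (∀ (x : BnIdx n → ℝ) (u v w : BnIdx n),
      ∑ s : BnIdx n,
        ((bnLinP n s u x + bnCubP n s u x)
            * pd (fun y => bnLinP n v w y + bnCubP n v w y) s x
          + (bnLinP n s v x + bnCubP n s v x)
            * pd (fun y => bnLinP n w u y + bnCubP n w u y) s x
          + (bnLinP n s w x + bnCubP n s w x)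
            * pd (fun y => bnLinP n u v y + bnCubP n u v y) s x) = 0) := by
  refine ⟨fun x u v w ↦ ?_, fun x u v w ↦ ?_⟩
  · simpa only [zero_mul, zero_add] using bnCubic_jacobi_and_compatible_general 0 x u v w
  · simpa only [one_mul] using bnCubic_jacobi_and_compatible_general 1 x u v w
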